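/- Let q be a prime power and let π be an order-q-subplane of PG(2,q³) tangent to ℓ∞ at T, with tangent splash S_T. For a point P of π not on ℓ∞, let t_P = { ℓ̄ ∩ ℓ∞ : ℓ a line of π through P }. Then the map P ↦ t_P is a bijection from the q²+q points of π not on ℓ∞ onto the set of order-q-sublines of ℓ∞ that contain T and are contained in S_T; in particular, S_T contains exactly q²+q order-q-sublines through T. -/

import Mathlib

namespace TangentSplashPaper

open Projectivization

/-- The point set of the projective plane `PG(2,K)`. -/
abbrev PGPoint (K : Type*) [Field K] := Projectivization K (Fin 3 → K)

/-- `ℓ` is a line of `PG(2,K)`: the set of points lying in a fixed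
2-dimensional linear subspace. -/
def IsLine {K : Type*} [Field K] (ℓ : Set (PGPoint K)) : Prop :=
  ∃ W : Submodule K (Fin 3 → K), Module.finrank K W = 2 ∧
    ℓ = {P : PGPoint K | P.submodule ≤ W}

/-- The distinguished line `ℓ∞` of `PG(2,K)`: points whose last homogeneous
coordinate vanishes. -/
def linf (K : Type*) [Field K] : Set (PGPoint K) := {P : PGPoint K | P.rep 2 = 0}

/-- The homography of `PG(2,K)` induced by a linear automorphism of `K³`;
as maps of point sets, these are exactly the elements of `PGL(3,K)`. -/
def hmap {K : Type*} [Field K] (f : (Fin 3 → K) ≃ₗ[K] (Fin 3 → K)) :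
    PGPoint K → PGPoint K :=
  Projectivization.map f.toLinearMap f.injective

/-- The base subplane `PG(2,F)`: points admitting homogeneous coordinates in
the subfield `F`. -/
def basePlane (F K : Type*) [Field F] [Field K] [Algebra F K] : Set (PGPoint K) :=
  {P : PGPoint K | ∃ v : Fin 3 → K, ∃ hv : v ≠ 0, P = Projectivization.mk K v hv ∧
    ∀ i, v i ∈ (algebraMap F K).range}

/-- An order-`q`-subplane of `PG(2,K)` (`q = |F|`): an image of `PG(2,F)`
under a homography. -/
def IsSubplane (F : Type*) {K : Type*} [Field F] [Field K] [Algebra F K]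
    (S : Set (PGPoint K)) : Prop :=
  ∃ f : (Fin 3 → K) ≃ₗ[K] (Fin 3 → K), S = hmap f '' basePlane F K

/-- An order-`q`-subline of `PG(2,K)`: the intersection of an order-`q`-subplane
with a line of `PG(2,K)` meeting it in `q+1` points. -/
def IsSubline (F : Type*) {K : Type*} [Field F] [Field K] [Algebra F K] (q : ℕ)
    (b : Set (PGPoint K)) : Prop :=
  ∃ S ℓ : Set (PGPoint K), IsSubplane F S ∧ IsLine ℓ ∧
    (S ∩ ℓ).ncard = q + 1 ∧ b = S ∩ ℓ

/-- The splash of a subplane `π` on `ℓ∞`: all points of `ℓ∞` lying on a line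
of `PG(2,K)` spanned by two points of `π`. -/
def splash {K : Type*} [Field K] (π : Set (PGPoint K)) : Set (PGPoint K) :=
  {X : PGPoint K | X ∈ linf K ∧ ∃ P Q : PGPoint K, P ∈ π ∧ Q ∈ π ∧ P ≠ Q ∧
    ∃ ℓ : Set (PGPoint K), IsLine ℓ ∧ P ∈ ℓ ∧ Q ∈ ℓ ∧ X ∈ ℓ}

/-- `S` is a tangent splash of `ℓ∞` with centre `T`: `S` is the splash of some
order-`q`-subplane meeting `ℓ∞` exactly in the point `T`. -/
def IsTangentSplash (F : Type*) {K : Type*} [Field F] [Field K] [Algebra F K]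
    (S : Set (PGPoint K)) (T : PGPoint K) : Prop :=
  ∃ π : Set (PGPoint K), IsSubplane F π ∧ π ∩ linf K = {T} ∧ S = splash π

/-- The set `t_P`: points of `ℓ∞` lying on the extension of a line of the
subplane `π` through the point `P` (lines of `π` are the lines of `PG(2,K)`
meeting `π` in `q+1` points). -/
def pencilTrace {K : Type*} [Field K] (q : ℕ) (π : Set (PGPoint K))
    (P : PGPoint K) : Set (PGPoint K) :=
  {X : PGPoint K | X ∈ linf K ∧ ∃ ℓ : Set (PGPoint K), IsLine ℓ ∧ P ∈ ℓ ∧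
    (π ∩ ℓ).ncard = q + 1 ∧ X ∈ ℓ}

/-!
Write `π = f (PG(2,F))` and `ℓ∞ = f (Ω^⊥)`, and describe the lines of `PG(2,F)` by their dual
coordinates `G`. The extended line of `G` meets `ℓ∞` in the single point `f (Ω × G)`. The lines
through `T` all meet `ℓ∞` in `T`. Two lines not both through `T` meet `ℓ∞` in different points,
because two lines of `π` intersect in a point of `π` and `T` is the only one on `ℓ∞`. So `S_T` is
the image of the set of lines of `π`, and `t_P` is the image of the pencil of `P`.

* `t_P` is a subline: `G ↦ Ω × G` restricted to `P^⊥` extends to a homography, since `Ω ∉ P^⊥`.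
* `P ↦ t_P` is injective: given `P ≠ Q`, some line through `P` avoids both `Q` and `T`.
* It is surjective: a subline through `T` contained in `S_T` has two further points, cut out by
  lines of `π` that intersect in a point `P`. It shares three points with `t_P`, and a subline is
  determined by three of its points.
-/

open scoped LinearAlgebra.Projectivization Matrix

section Lines

variable {K : Type*} [Field K]

theorem finrank_ker_dotProduct {g : Fin 3 → K} (hg : g ≠ 0) :
    Module.finrank K (LinearMap.ker (dotProductEquiv K (Fin 3) g)) = 2 := by
  have hdual : dotProductEquiv K (Fin 3) g ≠ 0 := by simpa using hg
  have hker := Module.Dual.finrank_ker_add_one_of_ne_zero hdual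
  rw [Module.finrank_fin_fun] at hker
  omega

theorem mem_ker_dotProduct_iff_orthogonal {g : Fin 3 → K} (hg : g ≠ 0) (P : PGPoint K) :
    P.submodule ≤ LinearMap.ker (dotProductEquiv K (Fin 3) g) ↔ P.orthogonal (mk K g hg) := by
  induction P using ind with | h v hv =>
  rw [orthogonal_mk hv hg, submodule_mk, Submodule.span_singleton_le_iff_mem, dotProduct_comm]
  rfl

theorem isLine_setOf_orthogonal (G : PGPoint K) : IsLine {P | P.orthogonal G} := by
  induction G using ind with | h g hg =>
  exact ⟨_, finrank_ker_dotProduct hg,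
    Set.ext fun P => (mem_ker_dotProduct_iff_orthogonal hg P).symm⟩

theorem IsLine.exists_eq_setOf_orthogonal {ℓ : Set (PGPoint K)} (hℓ : IsLine ℓ) :
    ∃ G : PGPoint K, ℓ = {P | P.orthogonal G} := by
  obtain ⟨W, hW, rfl⟩ := hℓ
  have hWtop : W < ⊤ := by
    refine lt_top_iff_ne_top.2 ?_
    rintro rfl
    simp at hW
  obtain ⟨φ, hφ, hWφ⟩ := Submodule.exists_le_ker_of_lt_top W hWtop
  obtain ⟨g, rfl⟩ := (dotProductEquiv K (Fin 3)).surjective φ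
  have hg : g ≠ 0 := by simpa using hφ
  have hWker : W = LinearMap.ker (dotProductEquiv K (Fin 3) g) :=
    Submodule.eq_of_le_of_finrank_eq hWφ (hW.trans (finrank_ker_dotProduct hg).symm)
  exact ⟨mk K g hg, Set.ext fun P => by
    rw [Set.mem_ofPred_eq, hWker, mem_ker_dotProduct_iff_orthogonal hg]; rfl⟩

theorem IsLine.mk_mem_iff_mem_span_pair {ℓ : Set (PGPoint K)} (hℓ : IsLine ℓ)
    {a b c : Fin 3 → K} (ha : a ≠ 0) (hb : b ≠ 0) (hc : c ≠ 0) (hab : mk K a ha ≠ mk K b hb)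
    (haℓ : mk K a ha ∈ ℓ) (hbℓ : mk K b hb ∈ ℓ) :
    mk K c hc ∈ ℓ ↔ ∃ s t : K, s • a + t • b = c := by
  obtain ⟨W, hW, rfl⟩ := hℓ
  simp only [Set.mem_ofPred_eq, submodule_mk, Submodule.span_singleton_le_iff_mem] at haℓ hbℓ ⊢
  have hspan : Submodule.span K {a, b} = W := by
    have hind : LinearIndependent K ![a, b] := by
      rwa [← crossProduct_ne_zero_iff_linearIndependent, Ne,
        ← mk_eq_mk_iff_crossProduct_eq_zero ha hb]
    refine Submodule.eq_of_le_of_finrank_eq (Submodule.span_le.2 (Set.pair_subset haℓ hbℓ)) ?_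
    rw [hW, ← Matrix.range_cons_cons_empty a b ![], finrank_span_eq_card hind, Fintype.card_fin]
  rw [← hspan, Submodule.mem_span_pair]

theorem mk_mem_linf_iff {v : Fin 3 → K} (hv : v ≠ 0) : mk K v hv ∈ linf K ↔ v 2 = 0 := by
  obtain ⟨a, ha⟩ := exists_smul_eq_mk_rep K v hv
  rw [linf, Set.mem_ofPred_eq, ← ha, Pi.smul_apply, smul_eq_zero_iff_eq]

theorem isLine_linf : IsLine (linf K) := by
  have he : (Pi.single 2 1 : Fin 3 → K) ≠ 0 := by simp
  convert isLine_setOf_orthogonal (mk K _ he) using 1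
  ext P
  induction P using ind with | h v hv =>
  rw [mk_mem_linf_iff, Set.mem_ofPred_eq, orthogonal_mk hv he, dotProduct_single_one]

theorem hmap_mk (f : (Fin 3 → K) ≃ₗ[K] (Fin 3 → K)) {v : Fin 3 → K} (hv : v ≠ 0) :
    hmap f (mk K v hv) = mk K (f v) (f.map_ne_zero_iff.2 hv) :=
  rfl

theorem hmap_injective (f : (Fin 3 → K) ≃ₗ[K] (Fin 3 → K)) : Function.Injective (hmap f) :=
  map_injective f.toLinearMap f.injective

theorem hmap_symm_hmap (f : (Fin 3 → K) ≃ₗ[K] (Fin 3 → K)) (P : PGPoint K) :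
    hmap f.symm (hmap f P) = P := by
  induction P using ind with | h v hv => simp only [hmap_mk, f.symm_apply_apply]

theorem hmap_hmap_symm (f : (Fin 3 → K) ≃ₗ[K] (Fin 3 → K)) (P : PGPoint K) :
    hmap f (hmap f.symm P) = P :=
  hmap_symm_hmap f.symm P

theorem hmap_trans (f g : (Fin 3 → K) ≃ₗ[K] (Fin 3 → K)) (P : PGPoint K) :
    hmap (g.trans f) P = hmap f (hmap g P) := by
  induction P using ind with | h v hv => rfl

theorem IsLine.preimage_hmap {ℓ : Set (PGPoint K)} (hℓ : IsLine ℓ)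
    (f : (Fin 3 → K) ≃ₗ[K] (Fin 3 → K)) : IsLine (hmap f ⁻¹' ℓ) := by
  obtain ⟨W, hW, rfl⟩ := hℓ
  refine ⟨W.comap f.toLinearMap, ?_, ?_⟩
  · rw [← hW]
    exact (f.submoduleMap _).finrank_eq.trans
      (by rw [Submodule.map_comap_eq_of_surjective f.surjective])
  · ext P
    induction P using ind with | h v hv =>
    simp only [hmap_mk, Set.mem_preimage, Set.mem_ofPred_eq, submodule_mk,
      Submodule.span_singleton_le_iff_mem, Submodule.mem_comap, LinearEquiv.coe_coe]

theorem IsLine.image_hmap {ℓ : Set (PGPoint K)} (hℓ : IsLine ℓ)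
    (f : (Fin 3 → K) ≃ₗ[K] (Fin 3 → K)) : IsLine (hmap f '' ℓ) := by
  rw [Set.image_eq_preimage_of_inverse (hmap_symm_hmap f) (hmap_hmap_symm f)]
  exact hℓ.preimage_hmap f.symm

theorem orthogonal_and_orthogonal_iff_eq_cross [DecidableEq K] {A B X : PGPoint K} (hAB : A ≠ B) :
    X.orthogonal A ∧ X.orthogonal B ↔ X = cross A B := by
  refine ⟨fun ⟨hA, hB⟩ => ?_, ?_⟩
  · exact (Configuration.ofField.eq_or_eq_of_orthogonal hA (cross_orthogonal_left hAB) hB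
      (cross_orthogonal_right hAB)).resolve_right hAB
  · rintro rfl
    exact ⟨cross_orthogonal_left hAB, cross_orthogonal_right hAB⟩

theorem exists_linearEquiv_eq_crossProduct {ω p : Fin 3 → K} (hωp : ω ⬝ᵥ p ≠ 0) :
    ∃ g : (Fin 3 → K) ≃ₗ[K] (Fin 3 → K), (∀ v, ω ⬝ᵥ g v = (p ⬝ᵥ v) * (ω ⬝ᵥ p)) ∧
      ∀ v, p ⬝ᵥ v = 0 → g v = ω ⨯₃ v := by
  -- `v ↦ ω ⨯₃ v` kills only `ω`, which does not lie in `p^⊥`, so it can be changed off `p^⊥`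
  -- to become invertible.
  let g : (Fin 3 → K) →ₗ[K] (Fin 3 → K) :=
    crossProduct ω + (dotProductEquiv K (Fin 3) p).smulRight p
  have g_apply (v : Fin 3 → K) : g v = ω ⨯₃ v + (p ⬝ᵥ v) • p := rfl
  have dot_g (v : Fin 3 → K) : ω ⬝ᵥ g v = (p ⬝ᵥ v) * (ω ⬝ᵥ p) := by
    rw [g_apply, dotProduct_add, dot_self_cross, zero_add, dotProduct_smul, smul_eq_mul]
  have g_eq_cross (v : Fin 3 → K) (hpv : p ⬝ᵥ v = 0) : g v = ω ⨯₃ v := by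
    rw [g_apply, hpv, zero_smul, add_zero]
  have hω : ω ≠ 0 := by
    rintro rfl
    exact hωp (zero_dotProduct p)
  have g_injective : Function.Injective g := by
    refine (injective_iff_map_eq_zero g).2 fun v hgv => by_contra fun hv => hωp ?_
    have hpv : p ⬝ᵥ v = 0 := by simpa [hgv, hωp] using dot_g v
    rw [g_eq_cross v hpv, ← mk_eq_mk_iff_crossProduct_eq_zero hω hv, mk_eq_mk_iff'] at hgv
    obtain ⟨c, rfl⟩ := hgv
    rw [smul_dotProduct, dotProduct_comm, hpv, smul_zero]
  exact ⟨LinearEquiv.ofInjectiveEndo g g_injective, dot_g, g_eq_cross⟩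

theorem exists_hmap_eq_cross [DecidableEq K] {Ω P : PGPoint K} (hPΩ : ¬ P.orthogonal Ω) :
    ∃ g : (Fin 3 → K) ≃ₗ[K] (Fin 3 → K), (∀ X, (hmap g X).orthogonal Ω ↔ X.orthogonal P) ∧
      ∀ X, X.orthogonal P → hmap g X = cross Ω X := by
  induction Ω using ind with | h ω hω =>
  induction P using ind with | h p hp =>
  rw [orthogonal_mk hp hω, dotProduct_comm] at hPΩ
  obtain ⟨g, dot_g, g_eq_cross⟩ := exists_linearEquiv_eq_crossProduct hPΩ
  refine ⟨g, fun X => X.ind fun v hv => ?_, fun X => X.ind fun v hv hX => ?_⟩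
  · rw [hmap_mk, orthogonal_mk _ hω, orthogonal_mk hv hp, dotProduct_comm, dot_g, mul_eq_zero,
      or_iff_left hPΩ, dotProduct_comm]
  · rw [orthogonal_mk hv hp, dotProduct_comm] at hX
    have hcross : ω ⨯₃ v ≠ 0 := g_eq_cross v hX ▸ g.map_ne_zero_iff.2 hv
    rw [cross_mk_of_cross_ne_zero hω hv hcross]
    simp only [hmap_mk, g_eq_cross v hX]

end Lines

section FinitePlane

variable {F : Type*} [Field F] [Finite F]

theorem card_projectivePlane : Nat.card (ℙ F (Fin 3 → F)) = Nat.card F ^ 2 + Nat.card F + 1 := by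
  rw [Projectivization.card_of_finrank F (Fin 3 → F) (Module.finrank_fin_fun F)]
  simp only [Finset.sum_range_succ, Finset.sum_range_zero]
  ring

theorem ncard_setOf_orthogonal (G : ℙ F (Fin 3 → F)) :
    {P : ℙ F (Fin 3 → F) | P.orthogonal G}.ncard = Nat.card F + 1 := by
  classical
  have := Fintype.ofFinite (ℙ F (Fin 3 → F))
  have hcard := Configuration.ProjectivePlane.card_points (ℙ F (Fin 3 → F)) (ℙ F (Fin 3 → F))
  rw [← Nat.card_eq_fintype_card, card_projectivePlane] at hcard
  have horder : Configuration.ProjectivePlane.order (ℙ F (Fin 3 → F)) (ℙ F (Fin 3 → F)) =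
      Nat.card F := by nlinarith
  rw [← horder]
  exact Configuration.ProjectivePlane.pointCount_eq (ℙ F (Fin 3 → F)) G

theorem one_lt_ncard_setOf_orthogonal (G : ℙ F (Fin 3 → F)) :
    1 < {P : ℙ F (Fin 3 → F) | P.orthogonal G}.ncard := by
  rw [ncard_setOf_orthogonal]
  exact Nat.lt_add_of_pos_left Nat.card_pos

theorem exists_orthogonal_not_orthogonal {P A B : ℙ F (Fin 3 → F)} (hPA : P ≠ A) (hPB : P ≠ B) :
    ∃ G : ℙ F (Fin 3 → F), G.orthogonal P ∧ ¬ G.orthogonal A ∧ ¬ G.orthogonal B := by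
  classical
  have hlt : ({cross P A, cross P B} : Set (ℙ F (Fin 3 → F))).ncard <
      {G : ℙ F (Fin 3 → F) | G.orthogonal P}.ncard := by
    have hpair := Set.ncard_insert_le (cross P A) {cross P B}
    have hq := Finite.one_lt_card (α := F)
    rw [Set.ncard_singleton] at hpair
    rw [ncard_setOf_orthogonal]
    omega
  obtain ⟨G, hGP, hG⟩ := Set.exists_mem_notMem_of_ncard_lt_ncard hlt
  rw [Set.mem_insert_iff, Set.mem_singleton_iff, not_or,
    ← orthogonal_and_orthogonal_iff_eq_cross hPA, ← orthogonal_and_orthogonal_iff_eq_cross hPB]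
    at hG
  exact ⟨G, hGP, fun hA => hG.1 ⟨hGP, hA⟩, fun hB => hG.2 ⟨hGP, hB⟩⟩

end FinitePlane

section Subplane

variable {F K : Type*} [Field F] [Field K] [Algebra F K]

variable (F K) in
/-- The embedding of `PG(2,F)` in `PG(2,K)` that reads homogeneous coordinates over `F` as
homogeneous coordinates over `K`. -/
def baseChange : ℙ F (Fin 3 → F) → PGPoint K :=
  Projectivization.map
    { toFun v := algebraMap F K ∘ v
      map_add' := map_add ((algebraMap F K).compLeft (Fin 3))
      map_smul' := fun c v => map_mul ((algebraMap F K).compLeft (Fin 3)) (Function.const _ c) v }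
    (algebraMap F K).injective.comp_left

theorem algebraMap_comp_ne_zero {v : Fin 3 → F} (hv : v ≠ 0) : algebraMap F K ∘ v ≠ 0 := by
  simpa [funext_iff] using hv

theorem baseChange_mk {v : Fin 3 → F} (hv : v ≠ 0) :
    baseChange F K (mk F v hv) = mk K (algebraMap F K ∘ v) (algebraMap_comp_ne_zero hv) :=
  rfl

theorem baseChange_orthogonal_iff {P G : ℙ F (Fin 3 → F)} :
    (baseChange F K P).orthogonal (baseChange F K G) ↔ P.orthogonal G := by
  induction P using ind with | h v hv =>
  induction G using ind with | h g hg =>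
  rw [baseChange_mk, baseChange_mk, orthogonal_mk, orthogonal_mk, ← RingHom.map_dotProduct,
    map_eq_zero_iff _ (algebraMap F K).injective]

theorem baseChange_injective : Function.Injective (baseChange F K) := fun P Q hPQ => by
  induction P using ind with | h v hv =>
  induction Q using ind with | h w hw =>
  have hmap : (algebraMap F K ∘ v) ⨯₃ (algebraMap F K ∘ w) = algebraMap F K ∘ (v ⨯₃ w) := by
    ext i
    fin_cases i <;> simp [cross_apply]
  rw [baseChange_mk, baseChange_mk, mk_eq_mk_iff_crossProduct_eq_zero, hmap] at hPQ
  exact (mk_eq_mk_iff_crossProduct_eq_zero hv hw).2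
    (not_imp_not.1 algebraMap_comp_ne_zero hPQ)

theorem range_baseChange : Set.range (baseChange F K) = basePlane F K := by
  refine Set.Subset.antisymm ?_ ?_
  · rintro _ ⟨P, rfl⟩
    induction P using ind with | h v hv =>
    exact ⟨_, _, baseChange_mk hv, fun i => ⟨v i, rfl⟩⟩
  · rintro _ ⟨v, hv, rfl, hvF⟩
    choose u hu using hvF
    obtain rfl : algebraMap F K ∘ u = v := funext hu
    refine ⟨mk F u ?_, rfl⟩
    rintro rfl
    exact hv (funext fun _ => map_zero _)

variable (F) in
/-- The points of the order-`q`-subplane `hmap f '' basePlane F K`, parametrized by `PG(2,F)`. -/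
def subplanePoint (f : (Fin 3 → K) ≃ₗ[K] (Fin 3 → K)) (P : ℙ F (Fin 3 → F)) : PGPoint K :=
  hmap f (baseChange F K P)

variable (F) in
/-- The extended lines of the order-`q`-subplane `hmap f '' basePlane F K`, parametrized by the
lines of `PG(2,F)` in dual coordinates: `G` stands for the line of all points orthogonal to `G`. -/
def extendedLine (f : (Fin 3 → K) ≃ₗ[K] (Fin 3 → K)) (G : ℙ F (Fin 3 → F)) : Set (PGPoint K) :=
  hmap f '' {X | X.orthogonal (baseChange F K G)}

variable {f : (Fin 3 → K) ≃ₗ[K] (Fin 3 → K)} {P Q G H : ℙ F (Fin 3 → F)} {ℓ : Set (PGPoint K)}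

theorem subplanePoint_injective : Function.Injective (subplanePoint F f) :=
  (hmap_injective f).comp baseChange_injective

theorem range_subplanePoint : Set.range (subplanePoint F f) = hmap f '' basePlane F K := by
  rw [← range_baseChange, ← Set.range_comp]
  rfl

theorem isLine_extendedLine : IsLine (extendedLine F f G) :=
  (isLine_setOf_orthogonal _).image_hmap f

theorem subplanePoint_mem_extendedLine_iff :
    subplanePoint F f P ∈ extendedLine F f G ↔ P.orthogonal G := by
  rw [subplanePoint, extendedLine, (hmap_injective f).mem_set_image, Set.mem_ofPred_eq,
    baseChange_orthogonal_iff]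

theorem image_basePlane_inter_extendedLine :
    hmap f '' basePlane F K ∩ extendedLine F f G = subplanePoint F f '' {P | P.orthogonal G} := by
  rw [← range_subplanePoint, Set.inter_comm, ← Set.image_preimage_eq_inter_range]
  exact congrArg _ (Set.ext fun _ => subplanePoint_mem_extendedLine_iff)

theorem ncard_image_basePlane_inter_extendedLine [Finite F] :
    (hmap f '' basePlane F K ∩ extendedLine F f G).ncard = Nat.card F + 1 := by
  rw [image_basePlane_inter_extendedLine, Set.ncard_image_of_injective _ subplanePoint_injective,
    ncard_setOf_orthogonal]

theorem IsLine.exists_eq_extendedLine (hℓ : IsLine ℓ) (hPQ : P ≠ Q)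
    (hP : subplanePoint F f P ∈ ℓ) (hQ : subplanePoint F f Q ∈ ℓ) :
    ∃ G, ℓ = extendedLine F f G := by
  classical
  obtain ⟨L, hL⟩ := (hℓ.preimage_hmap f).exists_eq_setOf_orthogonal
  have hPL : (baseChange F K P).orthogonal L := hL.subset hP
  have hQL : (baseChange F K Q).orthogonal L := hL.subset hQ
  have hLG : L = baseChange F K (cross P Q) :=
    (Configuration.ofField.eq_or_eq_of_orthogonal hPL hQL
      (baseChange_orthogonal_iff.2 (orthogonal_cross_left hPQ))
      (baseChange_orthogonal_iff.2 (orthogonal_cross_right hPQ))).resolve_left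
      (baseChange_injective.ne hPQ)
  refine ⟨cross P Q, ?_⟩
  rw [extendedLine, ← hLG, ← hL, Set.image_preimage_eq]
  exact fun X => ⟨_, hmap_hmap_symm f X⟩

theorem IsLine.ncard_image_basePlane_inter_eq_iff [Finite F] (hℓ : IsLine ℓ) :
    (hmap f '' basePlane F K ∩ ℓ).ncard = Nat.card F + 1 ↔ ∃ G, ℓ = extendedLine F f G := by
  refine ⟨fun hcard => ?_, ?_⟩
  · have hlt : 1 < (hmap f '' basePlane F K ∩ ℓ).ncard := by
      rw [hcard]
      exact Nat.lt_add_of_pos_left Nat.card_pos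
    obtain ⟨A, hA, B, hB, hAB⟩ :=
      (Set.one_lt_ncard (Set.finite_of_ncard_pos (zero_lt_one.trans hlt))).1 hlt
    rw [← range_subplanePoint] at hA hB
    obtain ⟨⟨⟨P, rfl⟩, hP⟩, ⟨Q, rfl⟩, hQ⟩ := And.intro hA hB
    exact hℓ.exists_eq_extendedLine (ne_of_apply_ne _ hAB) hP hQ
  · rintro ⟨G, rfl⟩
    exact ncard_image_basePlane_inter_extendedLine

end Subplane

section Tangent

variable {F K : Type*} [Field F] [Field K] [Algebra F K]

variable (F) in
/-- The order-`q`-subplane `hmap f '' basePlane F K` is tangent to `ℓ∞` at `subplanePoint F f t`,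
where `Ω` holds the dual coordinates of the line of `PG(2,K)` that `hmap f` sends to `ℓ∞`. -/
structure IsTangentFrame (f : (Fin 3 → K) ≃ₗ[K] (Fin 3 → K)) (Ω : PGPoint K)
    (t : ℙ F (Fin 3 → F)) : Prop where
  hmap_mem_linf_iff (X : PGPoint K) : hmap f X ∈ linf K ↔ X.orthogonal Ω
  subplanePoint_mem_linf_iff (P : ℙ F (Fin 3 → F)) : subplanePoint F f P ∈ linf K ↔ P = t

theorem exists_isTangentFrame {f : (Fin 3 → K) ≃ₗ[K] (Fin 3 → K)} {T : PGPoint K}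
    (htan : hmap f '' basePlane F K ∩ linf K = {T}) :
    ∃ Ω t, IsTangentFrame F f Ω t ∧ subplanePoint F f t = T := by
  obtain ⟨Ω, hΩ⟩ := (isLine_linf.preimage_hmap f).exists_eq_setOf_orthogonal
  rw [← range_subplanePoint] at htan
  obtain ⟨⟨t, rfl⟩, ht⟩ := htan.superset rfl
  refine ⟨Ω, t, ⟨fun X => Set.ext_iff.1 hΩ X, fun P => ⟨fun hP => ?_, ?_⟩⟩, rfl⟩
  · exact subplanePoint_injective (htan.subset ⟨⟨P, rfl⟩, hP⟩)
  · rintro rfl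
    exact ht

open Classical in
variable (F) in
/-- The intersection of `ℓ∞` with the extended line of dual coordinates `G`, where `Ω` is as in
`IsTangentFrame`. -/
noncomputable def pointAtInfinity (f : (Fin 3 → K) ≃ₗ[K] (Fin 3 → K)) (Ω : PGPoint K)
    (G : ℙ F (Fin 3 → F)) : PGPoint K :=
  hmap f (cross Ω (baseChange F K G))

namespace IsTangentFrame

variable {f : (Fin 3 → K) ≃ₗ[K] (Fin 3 → K)} {Ω X : PGPoint K} {t P G H : ℙ F (Fin 3 → F)}

theorem image_basePlane_diff_linf (h : IsTangentFrame F f Ω t) :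
    hmap f '' basePlane F K \ linf K = subplanePoint F f '' {t}ᶜ := by
  rw [← range_subplanePoint, ← Set.image_univ, ← Set.image_sdiff_preimage,
    Set.compl_eq_univ_sdiff]
  exact congrArg _ (congrArg _ (Set.ext h.subplanePoint_mem_linf_iff))

variable [Finite F]

theorem ne_baseChange (h : IsTangentFrame F f Ω t) : Ω ≠ baseChange F K G := by
  rintro rfl
  obtain ⟨P, hPG, hPt⟩ := Set.exists_ne_of_one_lt_ncard (one_lt_ncard_setOf_orthogonal G) t
  rw [Set.mem_ofPred_eq, ← baseChange_orthogonal_iff (K := K), ← h.hmap_mem_linf_iff] at hPG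
  exact hPt ((h.subplanePoint_mem_linf_iff P).1 hPG)

theorem mem_extendedLine_and_mem_linf_iff (h : IsTangentFrame F f Ω t) :
    X ∈ extendedLine F f G ∧ X ∈ linf K ↔ X = pointAtInfinity F f Ω G := by
  classical
  obtain ⟨X, rfl⟩ : ∃ Y, hmap f Y = X := ⟨_, hmap_hmap_symm f X⟩
  rw [extendedLine, (hmap_injective f).mem_set_image, h.hmap_mem_linf_iff, Set.mem_ofPred_eq,
    and_comm, orthogonal_and_orthogonal_iff_eq_cross h.ne_baseChange, pointAtInfinity,
    (hmap_injective f).eq_iff]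

theorem pointAtInfinity_mem_linf (h : IsTangentFrame F f Ω t) :
    pointAtInfinity F f Ω G ∈ linf K :=
  (h.mem_extendedLine_and_mem_linf_iff.2 rfl).2

theorem pointAtInfinity_mem_extendedLine (h : IsTangentFrame F f Ω t) :
    pointAtInfinity F f Ω G ∈ extendedLine F f G :=
  (h.mem_extendedLine_and_mem_linf_iff.2 rfl).1

theorem pointAtInfinity_eq_subplanePoint_iff (h : IsTangentFrame F f Ω t) :
    pointAtInfinity F f Ω G = subplanePoint F f t ↔ G.orthogonal t := by
  rw [eq_comm, ← h.mem_extendedLine_and_mem_linf_iff, subplanePoint_mem_extendedLine_iff,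
    h.subplanePoint_mem_linf_iff, and_iff_left rfl, orthogonal_comm]

theorem eq_or_pointAtInfinity_eq_subplanePoint (h : IsTangentFrame F f Ω t)
    (hGH : pointAtInfinity F f Ω G = pointAtInfinity F f Ω H) :
    G = H ∨ pointAtInfinity F f Ω G = subplanePoint F f t := by
  classical
  refine or_iff_not_imp_left.2 fun hne => ?_
  obtain ⟨X, hXG, hX⟩ := h.pointAtInfinity_mem_extendedLine (G := G)
  obtain ⟨Y, hYH, hY⟩ := hGH ▸ h.pointAtInfinity_mem_extendedLine (G := H)
  obtain rfl : X = Y := hmap_injective f (hX.trans hY.symm)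
  have hcross : X = baseChange F K (cross G H) :=
    (Configuration.ofField.eq_or_eq_of_orthogonal hXG
      (baseChange_orthogonal_iff.2 (cross_orthogonal_left hne)) hYH
      (baseChange_orthogonal_iff.2 (cross_orthogonal_right hne))).resolve_right
      (baseChange_injective.ne hne)
  have hmem : subplanePoint F f (cross G H) ∈ linf K := by
    rw [subplanePoint, ← hcross, hX]
    exact h.pointAtInfinity_mem_linf
  rw [← (h.subplanePoint_mem_linf_iff _).1 hmem, subplanePoint, ← hcross, hX]

theorem pencilTrace_subplanePoint (h : IsTangentFrame F f Ω t) :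
    pencilTrace (Nat.card F) (hmap f '' basePlane F K) (subplanePoint F f P) =
      pointAtInfinity F f Ω '' {G | G.orthogonal P} := by
  ext X
  constructor
  · rintro ⟨hX, ℓ, hℓ, hPℓ, hcard, hXℓ⟩
    obtain ⟨G, rfl⟩ := hℓ.ncard_image_basePlane_inter_eq_iff.1 hcard
    exact ⟨G, orthogonal_comm.1 (subplanePoint_mem_extendedLine_iff.1 hPℓ),
      (h.mem_extendedLine_and_mem_linf_iff.1 ⟨hXℓ, hX⟩).symm⟩
  · rintro ⟨G, hGP, rfl⟩
    exact ⟨h.pointAtInfinity_mem_linf, extendedLine F f G, isLine_extendedLine,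
      subplanePoint_mem_extendedLine_iff.2 (orthogonal_comm.1 hGP),
      ncard_image_basePlane_inter_extendedLine, h.pointAtInfinity_mem_extendedLine⟩

theorem splash_eq_range (h : IsTangentFrame F f Ω t) :
    splash (hmap f '' basePlane F K) = Set.range (pointAtInfinity F f Ω) := by
  rw [← range_subplanePoint]
  ext X
  constructor
  · rintro ⟨hX, _, _, ⟨P, rfl⟩, ⟨Q, rfl⟩, hPQ, ℓ, hℓ, hPℓ, hQℓ, hXℓ⟩
    obtain ⟨G, rfl⟩ := hℓ.exists_eq_extendedLine (ne_of_apply_ne _ hPQ) hPℓ hQℓ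
    exact ⟨G, (h.mem_extendedLine_and_mem_linf_iff.1 ⟨hXℓ, hX⟩).symm⟩
  · rintro ⟨G, rfl⟩
    obtain ⟨P, hP, Q, hQ, hPQ⟩ := (Set.one_lt_ncard).1 (one_lt_ncard_setOf_orthogonal G)
    exact ⟨h.pointAtInfinity_mem_linf, _, _, ⟨P, rfl⟩, ⟨Q, rfl⟩, subplanePoint_injective.ne hPQ,
      extendedLine F f G, isLine_extendedLine, subplanePoint_mem_extendedLine_iff.2 hP,
      subplanePoint_mem_extendedLine_iff.2 hQ, h.pointAtInfinity_mem_extendedLine⟩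

theorem isSubline_image_pointAtInfinity (h : IsTangentFrame F f Ω t) (hPt : P ≠ t) :
    IsSubline F (Nat.card F) (pointAtInfinity F f Ω '' {G | G.orthogonal P}) := by
  classical
  have hPΩ : ¬ (baseChange F K P).orthogonal Ω := by
    rwa [← h.hmap_mem_linf_iff, ← subplanePoint, h.subplanePoint_mem_linf_iff]
  obtain ⟨g, hgΩ, hg⟩ := exists_hmap_eq_cross hPΩ
  have mem_linf_iff (G : ℙ F (Fin 3 → F)) :
      subplanePoint F (g.trans f) G ∈ linf K ↔ G.orthogonal P := by
    rw [subplanePoint, hmap_trans, h.hmap_mem_linf_iff, hgΩ, baseChange_orthogonal_iff]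
  have hinter : hmap (g.trans f) '' basePlane F K ∩ linf K =
      subplanePoint F (g.trans f) '' {G | G.orthogonal P} := by
    rw [← range_subplanePoint, Set.inter_comm, ← Set.image_preimage_eq_inter_range]
    exact congrArg _ (Set.ext mem_linf_iff)
  refine ⟨_, linf K, ⟨g.trans f, rfl⟩, isLine_linf, ?_, ?_⟩
  · rw [hinter, Set.ncard_image_of_injective _ subplanePoint_injective, ncard_setOf_orthogonal]
  · rw [hinter]
    refine Set.image_congr fun G hG => ?_
    rw [subplanePoint, hmap_trans, hg _ (baseChange_orthogonal_iff.2 hG), pointAtInfinity]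

end IsTangentFrame

end Tangent

section Subline

variable {F K : Type*} [Field F] [Field K] [Algebra F K]

variable (F) in
/-- The points with homogeneous coordinates in the `F`-linear span of `a` and `b`. For linearly
independent `a` and `b` this is the order-`q`-subline through the points with coordinates `a`, `b`
and `a + b`. -/
def sublineSpan (a b : Fin 3 → K) : Set (PGPoint K) :=
  {P | ∃ (s t : F) (h : s • a + t • b ≠ 0), P = mk K (s • a + t • b) h}

theorem sublineSpan_smul_smul {c : K} (hc : c ≠ 0) (a b : Fin 3 → K) :
    sublineSpan F (c • a) (c • b) = sublineSpan F a b := by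
  have hcomm (s t : F) : s • c • a + t • c • b = c • (s • a + t • b) := by
    rw [smul_add, smul_comm s, smul_comm t]
  ext P
  simp only [sublineSpan, Set.mem_ofPred_eq, hcomm]
  refine exists₂_congr fun s t => ⟨?_, ?_⟩
  · rintro ⟨h, rfl⟩
    exact ⟨right_ne_zero_of_smul h, (mk_eq_mk_iff' _ _ _ _ _).2 ⟨c, rfl⟩⟩
  · rintro ⟨h, rfl⟩
    exact ⟨smul_ne_zero hc h, ((mk_eq_mk_iff' _ _ _ _ _).2 ⟨c, rfl⟩).symm⟩

theorem IsLine.exists_eq_sublineSpan {ℓ : Set (PGPoint K)} (hℓ : IsLine ℓ) {A B C : PGPoint K}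
    (hA : A ∈ ℓ) (hB : B ∈ ℓ) (hC : C ∈ ℓ) (hAB : A ≠ B) (hAC : A ≠ C) (hBC : B ≠ C) :
    ∃ (a b : Fin 3 → K) (ha : a ≠ 0) (hb : b ≠ 0) (hab : a + b ≠ 0),
      A = mk K a ha ∧ B = mk K b hb ∧ C = mk K (a + b) hab ∧ ℓ = sublineSpan K a b := by
  induction A using ind with | h a ha =>
  induction B using ind with | h b hb =>
  induction C using ind with | h c hc =>
  obtain ⟨s, t, rfl⟩ := (hℓ.mk_mem_iff_mem_span_pair ha hb hc hAB hA hB).1 hC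
  have hs : s ≠ 0 := by
    rintro rfl
    exact hBC.symm ((mk_eq_mk_iff' _ _ _ _ _).2 ⟨t, by rw [zero_smul, zero_add]⟩)
  have ht : t ≠ 0 := by
    rintro rfl
    exact hAC.symm ((mk_eq_mk_iff' _ _ _ _ _).2 ⟨s, by rw [zero_smul, add_zero]⟩)
  have hsa : mk K a ha = mk K (s • a) (smul_ne_zero hs ha) :=
    ((mk_eq_mk_iff' _ _ _ _ _).2 ⟨s, rfl⟩).symm
  have htb : mk K b hb = mk K (t • b) (smul_ne_zero ht hb) :=
    ((mk_eq_mk_iff' _ _ _ _ _).2 ⟨t, rfl⟩).symm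
  rw [hsa] at hA hAB
  rw [htb] at hB hAB
  refine ⟨s • a, t • b, _, _, hc, hsa, htb, rfl, Set.ext fun P => ?_⟩
  induction P using ind with | h v hv =>
  rw [hℓ.mk_mem_iff_mem_span_pair _ _ hv hAB hA hB]
  constructor
  · rintro ⟨x, y, rfl⟩
    exact ⟨x, y, hv, rfl⟩
  · rintro ⟨x, y, hne, hP⟩
    obtain ⟨c, rfl⟩ := (mk_eq_mk_iff' _ _ _ _ _).1 hP
    exact ⟨c * x, c * y, by rw [smul_add, mul_smul, mul_smul]⟩

theorem subplanePoint_mk (f : (Fin 3 → K) ≃ₗ[K] (Fin 3 → K)) {v : Fin 3 → F} (hv : v ≠ 0) :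
    subplanePoint F f (mk F v hv) =
      mk K (f (algebraMap F K ∘ v)) (f.map_ne_zero_iff.2 (algebraMap_comp_ne_zero hv)) :=
  rfl

theorem map_algebraMap_comp_smul_add_smul (f : (Fin 3 → K) ≃ₗ[K] (Fin 3 → K)) (s t : F)
    (a b : Fin 3 → F) :
    f (algebraMap F K ∘ (s • a + t • b)) =
      s • f (algebraMap F K ∘ a) + t • f (algebraMap F K ∘ b) := by
  let ψ : (Fin 3 → F) →ₗ[F] (Fin 3 → K) :=
    f.toLinearMap.restrictScalars F ∘ₗ (Algebra.linearMap F K).compLeft (Fin 3)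
  exact (map_add ψ _ _).trans (congrArg₂ _ (map_smul ψ s a) (map_smul ψ t b))

theorem image_subplanePoint_sublineSpan (f : (Fin 3 → K) ≃ₗ[K] (Fin 3 → K)) (a b : Fin 3 → F) :
    subplanePoint F f '' sublineSpan F a b =
      sublineSpan F (f (algebraMap F K ∘ a)) (f (algebraMap F K ∘ b)) := by
  ext X
  constructor
  · rintro ⟨_, ⟨s, t, h, rfl⟩, rfl⟩
    refine ⟨s, t, ?_, ?_⟩
    · rw [← map_algebraMap_comp_smul_add_smul]
      exact f.map_ne_zero_iff.2 (algebraMap_comp_ne_zero h)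
    · simp only [subplanePoint_mk, map_algebraMap_comp_smul_add_smul]
  · rintro ⟨s, t, h, rfl⟩
    have hst : s • a + t • b ≠ 0 := by
      intro hst
      rw [← map_algebraMap_comp_smul_add_smul, hst] at h
      exact h (by simp [Function.comp_def, ← Pi.zero_def])
    refine ⟨mk F _ hst, ⟨s, t, hst, rfl⟩, ?_⟩
    simp only [subplanePoint_mk, map_algebraMap_comp_smul_add_smul]

theorem IsSubline.exists_eq_sublineSpan {q : ℕ} {β : Set (PGPoint K)} (hβ : IsSubline F q β)
    {A B C : PGPoint K} (hA : A ∈ β) (hB : B ∈ β) (hC : C ∈ β) (hAB : A ≠ B) (hAC : A ≠ C)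
    (hBC : B ≠ C) :
    ∃ (a b : Fin 3 → K) (ha : a ≠ 0) (hb : b ≠ 0) (hab : a + b ≠ 0),
      A = mk K a ha ∧ B = mk K b hb ∧ C = mk K (a + b) hab ∧ β = sublineSpan F a b := by
  obtain ⟨S, ℓ, ⟨f, rfl⟩, hℓ, -, rfl⟩ := hβ
  rw [← range_subplanePoint] at hA hB hC
  obtain ⟨⟨⟨A, rfl⟩, hAℓ⟩, ⟨⟨B, rfl⟩, hBℓ⟩, ⟨C, rfl⟩, hCℓ⟩ := And.intro hA (And.intro hB hC)
  replace hAB := ne_of_apply_ne _ hAB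
  obtain ⟨G, rfl⟩ := hℓ.exists_eq_extendedLine hAB hAℓ hBℓ
  rw [subplanePoint_mem_extendedLine_iff] at hAℓ hBℓ hCℓ
  obtain ⟨a, b, ha, hb, hab, rfl, rfl, rfl, hG⟩ :=
    (isLine_setOf_orthogonal G).exists_eq_sublineSpan hAℓ hBℓ hCℓ hAB (ne_of_apply_ne _ hAC)
      (ne_of_apply_ne _ hBC)
  have hsum : f (algebraMap F K ∘ (a + b)) = f (algebraMap F K ∘ a) + f (algebraMap F K ∘ b) := by
    simpa only [one_smul] using map_algebraMap_comp_smul_add_smul f (1 : F) 1 a b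
  refine ⟨f (algebraMap F K ∘ a), f (algebraMap F K ∘ b), _, _,
    hsum ▸ f.map_ne_zero_iff.2 (algebraMap_comp_ne_zero hab), subplanePoint_mk f ha,
    subplanePoint_mk f hb, ?_, ?_⟩
  · simp only [subplanePoint_mk, hsum]
  · rw [image_basePlane_inter_extendedLine, hG, image_subplanePoint_sublineSpan]

theorem sublineSpan_eq_of_mk_eq {a b a' b' : Fin 3 → K} (ha : a ≠ 0) (hb : b ≠ 0)
    (hab : a + b ≠ 0) (ha' : a' ≠ 0) (hb' : b' ≠ 0) (hab' : a' + b' ≠ 0)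
    (hne : mk K a ha ≠ mk K b hb) (hA : mk K a ha = mk K a' ha') (hB : mk K b hb = mk K b' hb')
    (hC : mk K (a + b) hab = mk K (a' + b') hab') : sublineSpan F a b = sublineSpan F a' b' := by
  obtain ⟨x, rfl⟩ := (mk_eq_mk_iff' _ _ _ _ _).1 hA
  obtain ⟨y, rfl⟩ := (mk_eq_mk_iff' _ _ _ _ _).1 hB
  obtain ⟨z, hz⟩ := (mk_eq_mk_iff' _ _ _ _ _).1 hC
  have hind : LinearIndependent K ![a', b'] := by
    rwa [← crossProduct_ne_zero_iff_linearIndependent, Ne,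
      ← mk_eq_mk_iff_crossProduct_eq_zero ha' hb', ← hA, ← hB]
  rw [smul_add] at hz
  obtain ⟨rfl, rfl⟩ := hind.eq_of_pair hz
  exact sublineSpan_smul_smul (left_ne_zero_of_smul ha) a' b'

theorem IsSubline.eq_of_three_points {q q' : ℕ} {β γ : Set (PGPoint K)} (hβ : IsSubline F q β)
    (hγ : IsSubline F q' γ) {A B C : PGPoint K} (hA : A ∈ β ∩ γ) (hB : B ∈ β ∩ γ)
    (hC : C ∈ β ∩ γ) (hAB : A ≠ B) (hAC : A ≠ C) (hBC : B ≠ C) : β = γ := by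
  obtain ⟨a, b, ha, hb, hab, rfl, rfl, rfl, rfl⟩ :=
    hβ.exists_eq_sublineSpan hA.1 hB.1 hC.1 hAB hAC hBC
  obtain ⟨a', b', ha', hb', hab', hA', hB', hC', rfl⟩ :=
    hγ.exists_eq_sublineSpan hA.2 hB.2 hC.2 hAB hAC hBC
  exact sublineSpan_eq_of_mk_eq ha hb hab ha' hb' hab' hAB hA' hB' hC'

end Subline

section Bijection

variable {F K : Type*} [Field F] [Field K] [Finite F] [Algebra F K]

theorem IsSubline.exists_pair_ne {β : Set (PGPoint K)} (hβ : IsSubline F (Nat.card F) β)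
    {T : PGPoint K} (hT : T ∈ β) : ∃ A ∈ β, ∃ B ∈ β, T ≠ A ∧ T ≠ B ∧ A ≠ B := by
  obtain ⟨S, ℓ, -, -, hcard, rfl⟩ := hβ
  have hlt : 1 < ((S ∩ ℓ) \ {T}).ncard := by
    rw [Set.ncard_sdiff_singleton_of_mem hT, hcard]
    exact Finite.one_lt_card
  obtain ⟨A, hA, B, hB, hAB⟩ :=
    (Set.one_lt_ncard (Set.finite_of_ncard_pos (zero_lt_one.trans hlt))).1 hlt
  exact ⟨A, hA.1, B, hB.1, Ne.symm hA.2, Ne.symm hB.2, hAB⟩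

namespace IsTangentFrame

variable {f : (Fin 3 → K) ≃ₗ[K] (Fin 3 → K)} {Ω : PGPoint K} {t P : ℙ F (Fin 3 → F)}

theorem subplanePoint_mem_image_pointAtInfinity (h : IsTangentFrame F f Ω t) (hPt : P ≠ t) :
    subplanePoint F f t ∈ pointAtInfinity F f Ω '' {G | G.orthogonal P} := by
  classical
  exact ⟨cross P t, cross_orthogonal_left hPt,
    h.pointAtInfinity_eq_subplanePoint_iff.2 (cross_orthogonal_right hPt)⟩

theorem injOn_image_pointAtInfinity (h : IsTangentFrame F f Ω t) :
    Set.InjOn (fun P => pointAtInfinity F f Ω '' {G | G.orthogonal P}) {t}ᶜ := by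
  intro P hPt Q _ hPQ
  by_contra hne
  obtain ⟨G, hGP, hGQ, hGt⟩ := exists_orthogonal_not_orthogonal hne hPt
  obtain ⟨H, hHQ, hHG⟩ := hPQ.subset ⟨G, hGP, rfl⟩
  rcases h.eq_or_pointAtInfinity_eq_subplanePoint hHG.symm with rfl | hG
  · exact hGQ hHQ
  · exact hGt (h.pointAtInfinity_eq_subplanePoint_iff.1 hG)

theorem exists_image_pointAtInfinity_eq (h : IsTangentFrame F f Ω t) {β : Set (PGPoint K)}
    (hβ : IsSubline F (Nat.card F) β) (htβ : subplanePoint F f t ∈ β)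
    (hβsplash : β ⊆ splash (hmap f '' basePlane F K)) :
    ∃ P ≠ t, pointAtInfinity F f Ω '' {G | G.orthogonal P} = β := by
  classical
  obtain ⟨A, hA, B, hB, htA, htB, hAB⟩ := hβ.exists_pair_ne htβ
  rw [h.splash_eq_range] at hβsplash
  obtain ⟨⟨G, rfl⟩, ⟨H, rfl⟩⟩ := And.intro (hβsplash hA) (hβsplash hB)
  have hGH : G ≠ H := ne_of_apply_ne _ hAB
  have hPt : cross G H ≠ t := by
    rintro rfl
    exact htA (h.pointAtInfinity_eq_subplanePoint_iff.2 (orthogonal_cross_left hGH)).symm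
  exact ⟨cross G H, hPt, (h.isSubline_image_pointAtInfinity hPt).eq_of_three_points hβ
    ⟨h.subplanePoint_mem_image_pointAtInfinity hPt, htβ⟩
    ⟨⟨G, orthogonal_cross_left hGH, rfl⟩, hA⟩ ⟨⟨H, orthogonal_cross_right hGH, rfl⟩, hB⟩
    htA htB hAB⟩

theorem ncard_image_basePlane_diff_linf (h : IsTangentFrame F f Ω t) :
    (hmap f '' basePlane F K \ linf K).ncard = Nat.card F ^ 2 + Nat.card F := by
  rw [h.image_basePlane_diff_linf, Set.ncard_image_of_injective _ subplanePoint_injective,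
    Set.ncard_compl, Set.ncard_singleton, card_projectivePlane, Nat.add_sub_cancel]

theorem bijOn_pencilTrace (h : IsTangentFrame F f Ω t) :
    Set.BijOn (pencilTrace (Nat.card F) (hmap f '' basePlane F K))
      (hmap f '' basePlane F K \ linf K)
      {β | IsSubline F (Nat.card F) β ∧ β ⊆ linf K ∧ subplanePoint F f t ∈ β ∧
        β ⊆ splash (hmap f '' basePlane F K)} := by
  rw [h.image_basePlane_diff_linf]
  refine ⟨?_, ?_, ?_⟩
  · rintro _ ⟨P, hPt, rfl⟩
    rw [h.pencilTrace_subplanePoint, h.splash_eq_range]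
    exact ⟨h.isSubline_image_pointAtInfinity hPt,
      Set.image_subset_iff.2 fun _ _ => h.pointAtInfinity_mem_linf,
      h.subplanePoint_mem_image_pointAtInfinity hPt, Set.image_subset_range _ _⟩
  · refine Set.InjOn.image_of_comp (h.injOn_image_pointAtInfinity.congr fun P _ => ?_)
    exact h.pencilTrace_subplanePoint.symm
  · rintro β ⟨hβ, -, htβ, hβsplash⟩
    obtain ⟨P, hPt, hP⟩ := h.exists_image_pointAtInfinity_eq hβ htβ hβsplash
    exact ⟨_, ⟨P, hPt, rfl⟩, h.pencilTrace_subplanePoint.trans hP⟩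

end IsTangentFrame

end Bijection

theorem statement1_general {F K : Type*} [Field F] [Field K] [Finite F] [Algebra F K] (q : ℕ)
    (hF : Nat.card F = q) (π : Set (PGPoint K)) (T : PGPoint K) (hπ : IsSubplane F π)
    (htan : π ∩ linf K = {T}) :
    Set.BijOn (pencilTrace q π) (π \ linf K)
      {b : Set (PGPoint K) | IsSubline F q b ∧ b ⊆ linf K ∧ T ∈ b ∧ b ⊆ splash π} ∧
    (π \ linf K).ncard = q ^ 2 + q ∧
    {b : Set (PGPoint K) | IsSubline F q b ∧ b ⊆ linf K ∧ T ∈ b ∧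
      b ⊆ splash π}.ncard = q ^ 2 + q := by
  obtain ⟨f, rfl⟩ := hπ
  obtain ⟨Ω, t, h, rfl⟩ := exists_isTangentFrame htan
  subst hF
  have hbij := h.bijOn_pencilTrace
  have hcard := h.ncard_image_basePlane_diff_linf
  refine ⟨hbij, hcard, ?_⟩
  rw [← hbij.image_eq, hbij.injOn.ncard_image, hcard]

/-- `P ↦ t_P` is a bijection from the `q²+q` affine points of a tangent
order-`q`-subplane `π` onto the order-`q`-sublines of `ℓ∞` through `T` contained in the
tangent splash of `π`; in particular there are exactly `q²+q` such sublines. -/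
theorem statement1 (q : ℕ) (F K : Type) [Field F] [Field K] [Fintype F] [Fintype K]
    [Algebra F K] (hF : Fintype.card F = q) (hK : Fintype.card K = q ^ 3)
    (π : Set (PGPoint K)) (T : PGPoint K)
    (hπ : IsSubplane F π) (htan : π ∩ linf K = {T}) :
    Set.BijOn (pencilTrace q π) (π \ linf K)
      {b : Set (PGPoint K) | IsSubline F q b ∧ b ⊆ linf K ∧ T ∈ b ∧ b ⊆ splash π} ∧
    (π \ linf K).ncard = q ^ 2 + q ∧
    {b : Set (PGPoint K) | IsSubline F q b ∧ b ⊆ linf K ∧ T ∈ b ∧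
      b ⊆ splash π}.ncard = q ^ 2 + q :=
  statement1_general q (Nat.card_eq_fintype_card.trans hF) π T hπ htan

end TangentSplashPaper
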